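/- For every K ⊆ [n-1], Σ_{v ∈ W(K)} t^{des(v)} = Σ_{w ∈ W̃^K} t^{des(w)} (1+t)^{n-1-2·des(w)}, where W̃^K is the set of minimal-length coset representatives of W_K in S_n having no double descent and no initial descent. -/

import Mathlib

open Finset Polynomial

open scoped Classical

noncomputable section

/-- The letter (0-based) at 0-based position `i` in the one-line notation of `w`
(junk value `0` out of range). -/
def ol (n : ℕ) (w : Equiv.Perm (Fin n)) (i : ℕ) : ℕ :=
  if h : i < n then (w ⟨i, h⟩ : ℕ) else 0

/-- The descent set of `w`, with 0-based positions: `i ∈ DesSet n w` (for `i ≤ n-2`)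
means `w(i) > w(i+1)`.  (This is the paper's descent `i+1 ∈ [n-1]`.) -/
def DesSet (n : ℕ) (w : Equiv.Perm (Fin n)) : Finset ℕ :=
  (Finset.range (n - 1)).filter fun i => ol n w (i + 1) < ol n w i

/-- The number of descents of `w`. -/
def des (n : ℕ) (w : Equiv.Perm (Fin n)) : ℕ := (DesSet n w).card

/-- `w` has no double descent: no two consecutive descent positions. -/
def NoDoubleDescent (n : ℕ) (w : Equiv.Perm (Fin n)) : Prop :=
  ∀ i ∈ DesSet n w, i + 1 ∉ DesSet n w

/-- `w` has no initial descent (no descent at the first position). -/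
def NoInitialDescent (n : ℕ) (w : Equiv.Perm (Fin n)) : Prop := 0 ∉ DesSet n w

/-- `w` has no final descent (no descent at the last position, paper's `n-1`). -/
def NoFinalDescent (n : ℕ) (w : Equiv.Perm (Fin n)) : Prop := n - 2 ∉ DesSet n w

/-- The involution `w ↦ w*`, `w*(i) = n+1-w(n+1-i)` in 1-based notation. -/
def starPerm (n : ℕ) (w : Equiv.Perm (Fin n)) : Equiv.Perm (Fin n) :=
  (Fin.revPerm.trans w).trans Fin.revPerm

/-- The letter at 1-based position `i ∈ [1,n]` of `w`, as an element of `ℕ∞`,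
with the boundary convention `w(0) = w(n+1) = ⊤`. -/
def olb (n : ℕ) (w : Equiv.Perm (Fin n)) (i : ℕ) : ℕ∞ :=
  if h : 1 ≤ i ∧ i ≤ n then ((w ⟨i - 1, by omega⟩ : ℕ) : ℕ∞) else ⊤

/-- 1-based position `i` is a peak of `w` : `w(i-1) < w(i) > w(i+1)` (boundaries `⊤`,
so positions `1` and `n` are never peaks). -/
def IsPeak (n : ℕ) (w : Equiv.Perm (Fin n)) (i : ℕ) : Prop :=
  olb n w (i - 1) < olb n w i ∧ olb n w (i + 1) < olb n w i

/-- 1-based position `i` is a valley of `w` : `w(i-1) > w(i) < w(i+1)`. -/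
def IsValley (n : ℕ) (w : Equiv.Perm (Fin n)) (i : ℕ) : Prop :=
  olb n w i < olb n w (i - 1) ∧ olb n w i < olb n w (i + 1)

/-- 1-based position `i` holds a free letter of `w` : neither a peak nor a valley. -/
def IsFree (n : ℕ) (w : Equiv.Perm (Fin n)) (i : ℕ) : Prop :=
  ¬ IsPeak n w i ∧ ¬ IsValley n w i

/-- The number of peaks of `w`. -/
def pk (n : ℕ) (w : Equiv.Perm (Fin n)) : ℕ :=
  ((Finset.Icc 1 n).filter (IsPeak n w)).card

/-- The number of inversions of `w`, i.e. its Coxeter length. -/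
def invNum (n : ℕ) (w : Equiv.Perm (Fin n)) : ℕ :=
  (Finset.univ.filter fun p : Fin n × Fin n => p.1 < p.2 ∧ w p.2 < w p.1).card

/-- The standard parabolic subgroup `W_K` of `S_n` generated by the adjacent
transpositions `(k, k+1)` (1-based letters `k ∈ K`, i.e. 0-based `k-1`, `k`). -/
def WK (n : ℕ) (K : Finset ℕ) : Subgroup (Equiv.Perm (Fin n)) :=
  Subgroup.closure { s | ∃ k ∈ K, ∃ hk : k < n,
    s = Equiv.swap (⟨k - 1, lt_of_le_of_lt (Nat.sub_le k 1) hk⟩ : Fin n) ⟨k, hk⟩ }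

/-- The set `W^K` of permutations in which, for every `k ∈ K`, the letter `k`
appears before the letter `k+1` (1-based letters; these are the minimal-length
coset representatives of `W_K`). -/
def WKreps (n : ℕ) (K : Finset ℕ) : Finset (Equiv.Perm (Fin n)) :=
  Finset.univ.filter fun w => ∀ k ∈ K, ∀ hk : k < n,
    w⁻¹ (⟨k - 1, lt_of_le_of_lt (Nat.sub_le k 1) hk⟩ : Fin n) < w⁻¹ ⟨k, hk⟩

/-- The set `W(K) = { v ∈ S_n : v⁻¹(k) − v⁻¹(k+1) ≤ 1 for all k ∈ K }`
(1-based letters `k`, `k+1`). -/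
def Wset (n : ℕ) (K : Finset ℕ) : Finset (Equiv.Perm (Fin n)) :=
  Finset.univ.filter fun v => ∀ k ∈ K, ∀ hk : k < n,
    ((v⁻¹ (⟨k - 1, lt_of_le_of_lt (Nat.sub_le k 1) hk⟩ : Fin n) : Fin n) : ℕ) ≤
      ((v⁻¹ (⟨k, hk⟩ : Fin n) : Fin n) : ℕ) + 1

/-- The orbit of `i` under the action of `W_K` on positions/letters. -/
def orbitFinset (n : ℕ) (K : Finset ℕ) (i : Fin n) : Finset (Fin n) :=
  Finset.univ.filter fun j => ∃ u ∈ WK n K, u i = j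

/-- The set of orbits of `W_K` on `[n]`. -/
def orbitsFinset (n : ℕ) (K : Finset ℕ) : Finset (Finset (Fin n)) :=
  Finset.univ.image (orbitFinset n K)

/-- The one-line notation of `w` as a list of (0-based) letters. -/
def word (n : ℕ) (w : Equiv.Perm (Fin n)) : List ℕ := List.ofFn fun i => (w i : ℕ)

/-- A single valley hop of the free letter `j` from a downslope (in `v`) to the
nearest upslope of the same height (giving `u`): `j` moves rightwards directly
across the adjacent valley `B`. -/
def hopStep (v u : List ℕ) : Prop :=
  ∃ (A B C : List ℕ) (j : ℕ), B ≠ [] ∧ (∀ x ∈ B, x < j) ∧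
    (∀ x ∈ A.getLast?, j < x) ∧ (∀ x ∈ C.head?, j < x) ∧
    v = A ++ j :: (B ++ C) ∧ u = A ++ (B ++ j :: C)

/-- Hop equivalence (valley hopping) on `S_n`: the equivalence closure of single
hops of free letters. -/
def hopEquiv (n : ℕ) (a b : Equiv.Perm (Fin n)) : Prop :=
  Relation.EqvGen (fun x y : Equiv.Perm (Fin n) => hopStep (word n x) (word n y)) a b

/-- The index (1-based) of the `W_K`-orbit containing the letter `x ∈ [1,n]`:
orbits are consecutive intervals, numbered from the left. -/
def orbIdx (K : Finset ℕ) (x : ℕ) : ℕ :=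
  1 + ((Finset.Icc 1 (x - 1)).filter fun t => t ∉ K).card

/-- The (0-based) descent set of a word `v` of length `n`. -/
def wdes (n : ℕ) (v : Fin n → ℕ) : Finset ℕ :=
  (Finset.range (n - 1)).filter fun i =>
    if h : i + 1 < n then v ⟨i + 1, h⟩ < v ⟨i, by omega⟩ else False

/-- The word `v` has content `μ(K)`: for each `i`, the number of letters of `v`
equal to `i` is the size of the `i`-th orbit of `W_K` on `[1,n]`. -/
def HasContent (n : ℕ) (K : Finset ℕ) (v : Fin n → ℕ) : Prop :=
  ∀ i : ℕ, (Finset.univ.filter fun j => v j = i).card =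
    ((Finset.Icc 1 n).filter fun x => orbIdx K x = i).card

/-- `w` is the standardization `φ(v)` of the word `v`: `w` orders positions by
letter value, breaking ties from left to right.  (This is exactly the map `φ`
of the paper: if `j` is the `k`-th smallest position with `v(j) = i`, then
`φ(v)(j) = k + μ₁ + ⋯ + μ_{i-1}`.) -/
def IsStd (n : ℕ) (v : Fin n → ℕ) (w : Equiv.Perm (Fin n)) : Prop :=
  ∀ j j' : Fin n, w j < w j' ↔ (v j < v j' ∨ (v j = v j' ∧ j < j'))

/-!
Attach to `v ∈ W(K)` its block word, in which every letter is replaced by the number of its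
`W_K`-orbit. A descent of `v` is either a descent of the block word or a plateau, that is, a pair of
equal adjacent letters. Every set of plateaus is the set of descents inside orbits of exactly one
`v ∈ W(K)` with the given block word, and `v ∈ W^K` when this set is empty. So the two sides of the
theorem become the sums, over the rearrangements of one word, of the weight
`t ^ des * (1 + t) ^ plat` and of the weight `t ^ des * (1 + t) ^ (n - 1 - 2 * des)` restricted to
words without double or initial descent.

For both weights, let `F` be the generating function, in commuting variables, of the words in
letters below `a`, and `F'` that of the words in which `a` is allowed as well. Splitting words in
front of the first `a` yields `F' * (1 - a * (1 + t * F)) = (1 - t * a) * F` in both cases. As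
`1 - a * (1 + t * F)` is invertible as a power series, the two generating functions agree by
induction on the alphabet.
-/

/-! ### Generating functions of words by content -/

section WordSeries

variable {α R : Type*}

/-- The content of a word: how often each letter occurs in it. -/
def wordContent (l : List α) : α →₀ ℕ := Multiset.toFinsupp (l : Multiset α)

lemma wordContent_nil : wordContent ([] : List α) = 0 := map_zero _

lemma wordContent_singleton (a : α) : wordContent [a] = Finsupp.single a 1 :=
  Multiset.toFinsupp_singleton a

lemma wordContent_append (u v : List α) : wordContent (u ++ v) = wordContent u + wordContent v :=
  Multiset.toFinsupp_add (u : Multiset α) v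

lemma wordContent_eq_iff_perm {u v : List α} : wordContent u = wordContent v ↔ u.Perm v :=
  Multiset.toFinsupp.injective.eq_iff.trans Multiset.coe_eq_coe

/-- The finite set of words of a language `L` that have content `μ`. -/
def wordsOfContent (L : Language α) (μ : α →₀ ℕ) : Finset (List α) :=
  μ.toMultiset.lists.toFinset.filter (· ∈ L)

lemma mem_wordsOfContent {L : Language α} {μ : α →₀ ℕ} {l : List α} :
    l ∈ wordsOfContent L μ ↔ wordContent l = μ ∧ l ∈ L := by
  have hlists : l ∈ μ.toMultiset.lists ↔ μ.toMultiset = (l : Multiset α) :=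
    Multiset.mem_lists_iff ..
  rw [wordsOfContent, mem_filter, Multiset.mem_toFinset, hlists, wordContent,
    ← Multiset.toFinsupp.injective.eq_iff, Finsupp.toMultiset_toFinsupp, eq_comm]

section CommSemiring

variable [CommSemiring R]

/-- The generating function, in commuting variables, of the words of a language `L`, the word `l`
being weighted by `φ l`. -/
def wordSeries (L : Language α) : (List α → R) →ₗ[R] MvPowerSeries α R where
  toFun φ μ := ∑ l ∈ wordsOfContent L μ, φ l
  map_add' _ _ := funext fun _ => sum_add_distrib
  map_smul' _ _ := funext fun _ => (mul_sum ..).symm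

lemma coeff_wordSeries (L : Language α) (φ : List α → R) (μ : α →₀ ℕ) :
    MvPowerSeries.coeff μ (wordSeries L φ) = ∑ l ∈ wordsOfContent L μ, φ l :=
  rfl

lemma wordSeries_congr {L : Language α} {φ ψ : List α → R} (h : ∀ l ∈ L, φ l = ψ l) :
    wordSeries L φ = wordSeries L ψ :=
  funext fun _ => sum_congr rfl fun l hl => h l (mem_wordsOfContent.1 hl).2

lemma wordSeries_add_language {L M : Language α} (h : ∀ l ∈ L, l ∉ M) (φ : List α → R) :
    wordSeries (L + M) φ = wordSeries L φ + wordSeries M φ := by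
  ext μ
  simp only [coeff_wordSeries, map_add, wordsOfContent, Language.mem_add, filter_or]
  exact sum_union (disjoint_filter.2 fun l _ => h l)

lemma wordSeries_indicator {L M : Language α} (h : M ≤ L) (φ : List α → R) :
    wordSeries L (Set.indicator {l | l ∈ M} φ) = wordSeries M φ := by
  ext μ
  rw [coeff_wordSeries, coeff_wordSeries, sum_indicator_eq_sum_filter]
  refine sum_congr (ext fun l => ?_) fun _ _ => rfl
  simp only [mem_filter, mem_wordsOfContent, and_assoc, Set.mem_ofPred_eq]
  exact ⟨fun hl => ⟨hl.1, hl.2.2⟩, fun hl => ⟨hl.1, h hl.2, hl.2⟩⟩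

lemma wordSeries_single [DecidableEq α] {L : Language α} {l : List α} (hl : l ∈ L) (r : R) :
    wordSeries L (Pi.single l r) = MvPowerSeries.monomial (wordContent l) r := by
  ext μ
  rw [coeff_wordSeries, MvPowerSeries.coeff_monomial, sum_pi_single']
  simp only [mem_wordsOfContent, hl, and_true, eq_comm]

lemma wordSeries_one (φ : List α → R) :
    wordSeries 1 φ = MvPowerSeries.C (φ []) := by
  rw [wordSeries_congr (ψ := Pi.single [] (φ [])), wordSeries_single (Language.nil_mem_one),
    wordContent_nil]
  · rfl
  · rintro l rfl
    rw [Pi.single_eq_same]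

lemma wordSeries_mul {L M : Language α} {φ ψ χ : List α → R}
    (huniq : ∀ u ∈ L, ∀ v ∈ M, ∀ u' ∈ L, ∀ v' ∈ M, u ++ v = u' ++ v' → u = u' ∧ v = v')
    (hχ : ∀ u ∈ L, ∀ v ∈ M, χ (u ++ v) = φ u * ψ v) :
    wordSeries (L * M) χ = wordSeries L φ * wordSeries M ψ := by
  ext μ
  rw [MvPowerSeries.coeff_mul]
  simp only [coeff_wordSeries, sum_mul_sum, ← sum_product', sum_sigma']
  symm
  refine sum_nbij (fun x => x.2.1 ++ x.2.2) ?_ ?_ ?_ ?_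
  · rintro ⟨⟨_, _⟩, u, v⟩ h
    simp only [mem_sigma, HasAntidiagonal.mem_antidiagonal, mem_product, mem_wordsOfContent] at h
    obtain ⟨rfl, ⟨rfl, hu⟩, rfl, hv⟩ := h
    exact mem_wordsOfContent.2 ⟨wordContent_append u v, Language.append_mem_mul hu hv⟩
  · rintro ⟨⟨_, _⟩, u, v⟩ h ⟨⟨_, _⟩, u', v'⟩ h' heq
    simp only [coe_sigma, Set.mem_sigma_iff, mem_coe, mem_product, mem_wordsOfContent] at h h'
    obtain ⟨-, ⟨rfl, hu⟩, rfl, hv⟩ := h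
    obtain ⟨-, ⟨rfl, hu'⟩, rfl, hv'⟩ := h'
    obtain ⟨rfl, rfl⟩ := huniq u hu v hv u' hu' v' hv' heq
    rfl
  · intro l hl
    obtain ⟨rfl, u, hu, v, hv, rfl⟩ := mem_wordsOfContent.1 hl
    refine ⟨⟨(wordContent u, wordContent v), (u, v)⟩, ?_, rfl⟩
    simp only [coe_sigma, Set.mem_sigma_iff, mem_coe, HasAntidiagonal.mem_antidiagonal,
      mem_product, mem_wordsOfContent, wordContent_append, true_and]
    exact ⟨hu, hv⟩
  · rintro ⟨_, u, v⟩ h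
    simp only [mem_sigma, mem_product, mem_wordsOfContent] at h
    exact (hχ u h.2.1.2 v h.2.2.2).symm

end CommSemiring

/-- The language of all words whose letters lie in `s`. -/
def words (s : Finset α) : Language α := {l | ∀ x ∈ l, x ∈ s}

/-- The language of all words with letters in `insert a s` that are empty or begin with `a`. -/
def tails [DecidableEq α] (a : α) (s : Finset α) : Language α := 1 + {[a]} * words (insert a s)

lemma nil_mem_words (s : Finset α) : [] ∈ words s := fun _ h => absurd h List.not_mem_nil

variable [DecidableEq α]

lemma tails_cases {a : α} {s : Finset α} {l : List α} (hl : l ∈ tails a s) :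
    l = [] ∨ ∃ m ∈ words (insert a s), l = a :: m := by
  rcases hl with rfl | ⟨_, rfl, m, hm, rfl⟩
  exacts [Or.inl rfl, Or.inr ⟨m, hm, rfl⟩]

lemma words_insert (a : α) (s : Finset α) : words (insert a s) = words s * tails a s := by
  ext l
  constructor
  · intro hl
    by_cases ha : a ∈ l
    · obtain ⟨u, v, rfl, hau⟩ := List.eq_append_cons_of_mem ha
      refine ⟨u, fun x hx => ?_, a :: v, Or.inr ⟨[a], rfl, v, fun x hx => ?_, rfl⟩, rfl⟩
      · exact mem_of_mem_insert_of_ne (hl x (List.mem_append_left _ hx))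
          (ne_of_mem_of_not_mem hx hau)
      · exact hl x (List.mem_append_right _ (List.mem_cons_of_mem a hx))
    · refine ⟨l, fun x hx => ?_, [], Or.inl rfl, List.append_nil l⟩
      exact mem_of_mem_insert_of_ne (hl x hx) (ne_of_mem_of_not_mem hx ha)
  · rintro ⟨u, hu, v, hv, rfl⟩ x hx
    rcases List.mem_append.1 hx with hx | hx
    · exact mem_insert_of_mem (hu x hx)
    · obtain rfl | ⟨m, hm, rfl⟩ := tails_cases hv
      · exact absurd hx List.not_mem_nil
      · rcases List.mem_cons.1 hx with rfl | hx
        exacts [mem_insert_self _ s, hm x hx]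

lemma tails_le_words (a : α) (s : Finset α) : tails a s ≤ words (insert a s) := by
  rw [words_insert]
  exact fun v hv => ⟨[], nil_mem_words s, v, hv, rfl⟩

lemma wordsOfContent_words_toFinset (l : List α) :
    wordsOfContent (words l.toFinset) (wordContent l) = l.permutations.toFinset := by
  ext m
  rw [mem_wordsOfContent, wordContent_eq_iff_perm, List.mem_toFinset, List.mem_permutations,
    and_iff_left_iff_imp]
  exact fun h x hx => List.mem_toFinset.2 (h.mem_iff.1 hx)

lemma takeWhile_append_tails {a : α} {s : Finset α} (ha : a ∉ s) {u v : List α}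
    (hu : u ∈ words s) (hv : v ∈ tails a s) : (u ++ v).takeWhile (· ≠ a) = u := by
  have hau : ∀ x ∈ u, decide (x ≠ a) = true := fun x hx =>
    decide_eq_true (ne_of_mem_of_not_mem (hu x hx) ha)
  rw [List.takeWhile_append_of_pos hau]
  obtain rfl | ⟨m, -, rfl⟩ := tails_cases hv <;> simp

lemma append_tails_inj {a : α} {s : Finset α} (ha : a ∉ s) {u v u' v' : List α}
    (hu : u ∈ words s) (hv : v ∈ tails a s) (hu' : u' ∈ words s) (hv' : v' ∈ tails a s)
    (h : u ++ v = u' ++ v') : u = u' ∧ v = v' := by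
  obtain rfl : u = u' := by
    rw [← takeWhile_append_tails ha hu hv, h, takeWhile_append_tails ha hu' hv']
  exact ⟨rfl, List.append_cancel_left h⟩

lemma append_mem_tails_iff {a : α} {s : Finset α} (ha : a ∉ s) {u v : List α}
    (hu : u ∈ words s) (hv : v ∈ tails a s) : u ++ v ∈ tails a s ↔ u = [] :=
  ⟨fun h => (append_tails_inj ha hu hv (nil_mem_words s) h rfl).1, fun h => h ▸ hv⟩

variable [CommSemiring R] {a : α} {s : Finset α}

lemma wordSeries_words_single_nil (s : Finset α) :
    wordSeries (words s) (Pi.single [] (1 : R)) = 1 := by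
  rw [wordSeries_single (nil_mem_words s), wordContent_nil]
  rfl

/-- A word with letters in `insert a s` is split in front of the first occurrence of `a`. -/
lemma wordSeries_words_insert (ha : a ∉ s) {φ ψ χ : List α → R}
    (hχ : ∀ u ∈ words s, ∀ v ∈ tails a s, χ (u ++ v) = φ u * ψ v) :
    wordSeries (words (insert a s)) χ = wordSeries (words s) φ * wordSeries (tails a s) ψ := by
  rw [words_insert]
  exact wordSeries_mul (fun _ hu _ hv _ hu' _ hv' => append_tails_inj ha hu hv hu' hv') hχ

lemma wordSeries_tails (χ : List α → R) :
    wordSeries (tails a s) χ = MvPowerSeries.C (χ []) +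
      MvPowerSeries.X a * wordSeries (words (insert a s)) (fun l => χ (a :: l)) := by
  have hletter : wordSeries {[a]} (Pi.single [a] (1 : R)) = MvPowerSeries.X a := by
    rw [wordSeries_single (L := {[a]}) rfl, wordContent_singleton]
    rfl
  rw [tails, wordSeries_add_language, wordSeries_one, wordSeries_mul (φ := Pi.single [a] 1)
    (ψ := fun l => χ (a :: l)), hletter]
  · rintro _ rfl v - _ rfl v' - h
    exact ⟨rfl, List.append_cancel_left h⟩
  · rintro _ rfl v -
    rw [Pi.single_eq_same, one_mul]
    rfl
  · rintro _ rfl ⟨_, rfl, _, _, h⟩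
    exact List.cons_ne_nil _ _ h

end WordSeries

/-! ### Two weights on words with the same generating function -/

section Weights

variable {α R : Type*} [LinearOrder α]

section CommSemiring

variable [CommSemiring R]

/-- The weight `t ^ des * (1 + t) ^ plat` of a word, where `plat` counts the pairs of equal
adjacent letters. -/
def desPlatWeight (t : R) : List α → R
  | [] => 1
  | [_] => 1
  | a :: b :: l => (if b < a then t else if b = a then 1 + t else 1) * desPlatWeight t (b :: l)

/-- The weight `t ^ des * (1 + t) ^ (n - 1 - 2 * des)` of a word of length `n` without double or
initial descent, all other words having weight `0`. The flag `up` says that the word is preceded by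
a weak ascent: an initial descent is then permitted, and the exponent of `1 + t` is larger by one
unless the word is empty. -/
def gammaWeight (t : R) : (up : Bool) → List α → R
  | _, [] => 1
  | false, [_] => 1
  | true, [_] => 1 + t
  | false, a :: b :: l => if b < a then 0 else gammaWeight t true (b :: l)
  | true, a :: b :: l =>
      if b < a then t * gammaWeight t false (b :: l) else (1 + t) * gammaWeight t true (b :: l)

lemma desPlatWeight_append (t : R) {u v : List α} (h : ∀ x ∈ u, ∀ y ∈ v.head?, x < y) :
    desPlatWeight t (u ++ v) = desPlatWeight t u * desPlatWeight t v := by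
  induction u using List.twoStepInduction with
  | nil => simp [desPlatWeight]
  | singleton x =>
    cases v with
    | nil => simp [desPlatWeight]
    | cons y v =>
      have hxy : x < y := h x (List.mem_singleton_self x) y rfl
      simp [desPlatWeight, hxy.not_gt, hxy.ne']
  | cons_cons x y u _ ih =>
    simp only [List.cons_append, desPlatWeight, mul_assoc] at ih ⊢
    rw [ih y fun z hz => h z (List.mem_cons_of_mem x hz)]

lemma gammaWeight_append (t : R) {u v : List α} (hu : u ≠ [])
    (h : ∀ x ∈ u, ∀ y ∈ v.head?, x ≤ y) (up : Bool) :
    gammaWeight t up (u ++ v) = gammaWeight t up u * gammaWeight t true v := by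
  induction u using List.twoStepInduction generalizing up with
  | nil => exact absurd rfl hu
  | singleton x =>
    cases v with
    | nil => simp [gammaWeight]
    | cons y v =>
      have hxy : x ≤ y := h x (List.mem_singleton_self x) y rfl
      cases up <;> simp [gammaWeight, hxy.not_gt]
  | cons_cons x y u _ ih =>
    have ih' := ih y (List.cons_ne_nil y u) fun z hz => h z (List.mem_cons_of_mem x hz)
    simp only [List.cons_append] at ih' ⊢
    cases up <;> simp only [gammaWeight, ih'] <;> split_ifs <;> ring

end CommSemiring

section MaxLetter

variable [CommSemiring R] {a : α} {s : Finset α} (ha : ∀ x ∈ s, x < a) {u v : List α}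
  (hu : u ∈ words s) (hv : v ∈ tails a s)

include ha hu hv

lemma lt_head_of_mem_tails : ∀ x ∈ u, ∀ y ∈ v.head?, x < y := by
  intro x hx y hy
  obtain rfl | ⟨m, -, rfl⟩ := tails_cases hv
  · cases hy
  · obtain rfl : a = y := Option.some_inj.1 hy
    exact ha x (hu x hx)

lemma desPlatWeight_cons_append_add (t : R) :
    desPlatWeight t (a :: (u ++ v)) + t * (Pi.single [] 1 : List α → R) (u ++ v) =
      ((Pi.single [] 1 : List α → R) u + t * desPlatWeight t u) * desPlatWeight t v := by
  cases u with
  | nil =>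
    obtain rfl | ⟨m, -, rfl⟩ := tails_cases hv <;> simp [desPlatWeight]
  | cons x u =>
    have happ := desPlatWeight_append t (lt_head_of_mem_tails ha hu hv)
    have hxa : x < a := ha x (hu x List.mem_cons_self)
    simp only [List.cons_append] at happ
    simp [desPlatWeight, hxa, happ, mul_assoc]

lemma gammaWeight_true_cons_append (t : R) :
    gammaWeight t true (a :: (u ++ v)) =
      ((Pi.single [] 1 : List α → R) u + t * gammaWeight t false u) * gammaWeight t true v := by
  cases u with
  | nil =>
    obtain rfl | ⟨m, -, rfl⟩ := tails_cases hv <;> simp [gammaWeight]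
  | cons x u =>
    have happ := gammaWeight_append t (List.cons_ne_nil x u)
      (fun y hy z hz => (lt_head_of_mem_tails ha hu hv y hy z hz).le) false
    have hxa : x < a := ha x (hu x List.mem_cons_self)
    simp only [List.cons_append] at happ
    simp [gammaWeight, hxa, happ, mul_assoc]

lemma gammaWeight_false_cons_append (t : R) :
    gammaWeight t false (a :: (u ++ v)) =
      (Pi.single [] 1 : List α → R) u * gammaWeight t true v := by
  cases u with
  | nil =>
    obtain rfl | ⟨m, -, rfl⟩ := tails_cases hv <;> simp [gammaWeight]
  | cons x u => simp [gammaWeight, ha x (hu x List.mem_cons_self)]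

end MaxLetter

section FunctionalEquation

variable [CommRing R] {a : α} {s : Finset α} (ha : ∀ x ∈ s, x < a) (t : R)

include ha

lemma notMem_of_forall_lt : a ∉ s := fun h => (ha a h).false

/-- Splitting in front of the first largest letter gives `F' = F * T`, where `T`, the series of the
possible second factors, satisfies `T = 1 + a * ((1 + t * F) * T - t)`. -/
lemma wordSeries_desPlatWeight_insert :
    wordSeries (words (insert a s)) (desPlatWeight t) *
        (1 - MvPowerSeries.X a * (1 + t • wordSeries (words s) (desPlatWeight t))) =
      (1 - t • MvPowerSeries.X a) * wordSeries (words s) (desPlatWeight t) := by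
  have hmem := notMem_of_forall_lt ha
  set F := wordSeries (words s) (desPlatWeight t)
  set T := wordSeries (tails a s) (desPlatWeight t) with hT
  have hF : wordSeries (words (insert a s)) (desPlatWeight t) = F * T :=
    wordSeries_words_insert hmem fun u hu v hv =>
      desPlatWeight_append t (lt_head_of_mem_tails ha hu hv)
  have hcons : wordSeries (words (insert a s)) (fun l => desPlatWeight t (a :: l)) =
      (1 + t • F) * T - t • 1 := by
    have h := wordSeries_words_insert hmem
      (χ := (fun l => desPlatWeight t (a :: l)) + t • Pi.single [] 1)
      (φ := Pi.single [] 1 + t • desPlatWeight t) (ψ := desPlatWeight t)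
      fun u hu v hv => desPlatWeight_cons_append_add ha hu hv t
    simp only [map_add, map_smul, wordSeries_words_single_nil] at h
    exact eq_sub_of_add_eq h
  have hTeq : T = 1 + MvPowerSeries.X a * ((1 + t • F) * T - t • 1) := by
    rw [← hcons, hT, wordSeries_tails, desPlatWeight, map_one]
  simp only [MvPowerSeries.smul_eq_C_mul] at hTeq ⊢
  linear_combination
    (1 - MvPowerSeries.X a * (1 + MvPowerSeries.C t * F)) * hF + F * hTeq

lemma wordSeries_tails_gammaWeight_true :
    wordSeries (tails a s) (gammaWeight t true) = 1 + MvPowerSeries.X a *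
      ((1 + t • wordSeries (words s) (gammaWeight t false)) *
        wordSeries (tails a s) (gammaWeight t true)) := by
  have h := wordSeries_words_insert (notMem_of_forall_lt ha)
    (χ := fun l => gammaWeight t true (a :: l))
    (φ := Pi.single [] 1 + t • gammaWeight t false) (ψ := gammaWeight t true)
    fun u hu v hv => gammaWeight_true_cons_append ha hu hv t
  rw [map_add, map_smul, wordSeries_words_single_nil] at h
  rw [← h, wordSeries_tails, gammaWeight, map_one]

/-- Splitting in front of the first largest letter gives `G' = (G - 1) * T + (1 + a * T)`, where
the second summand comes from the words with empty first factor and `T = 1 + a * (1 + t * G) * T`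
is the series of the possible second factors after a weak ascent. -/
lemma wordSeries_gammaWeight_insert :
    wordSeries (words (insert a s)) (gammaWeight t false) *
        (1 - MvPowerSeries.X a * (1 + t • wordSeries (words s) (gammaWeight t false))) =
      (1 - t • MvPowerSeries.X a) * wordSeries (words s) (gammaWeight t false) := by
  have hmem := notMem_of_forall_lt ha
  set G := wordSeries (words s) (gammaWeight t false)
  set T := wordSeries (tails a s) (gammaWeight t true)
  have hT : T = 1 + MvPowerSeries.X a * ((1 + t • G) * T) :=
    wordSeries_tails_gammaWeight_true ha t
  have hempty : wordSeries (tails a s) (gammaWeight t false) = 1 + MvPowerSeries.X a * T := by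
    rw [wordSeries_tails, wordSeries_words_insert hmem fun u hu v hv =>
      gammaWeight_false_cons_append ha hu hv t, wordSeries_words_single_nil, one_mul, gammaWeight,
      map_one]
  have hnonempty : wordSeries (words (insert a s))
      (Set.indicator {l | l ∈ tails a s}ᶜ (gammaWeight t false)) = (G - 1) * T := by
    rw [wordSeries_words_insert hmem (φ := gammaWeight t false - Pi.single [] 1), map_sub,
      wordSeries_words_single_nil]
    intro u hu v hv
    rcases eq_or_ne u [] with rfl | hne
    · simp [hv, gammaWeight]
    · have hmem' : u ++ v ∉ tails a s := fun h => hne ((append_mem_tails_iff hmem hu hv).1 h)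
      have hle : ∀ x ∈ u, ∀ y ∈ v.head?, x ≤ y := fun x hx y hy =>
        (lt_head_of_mem_tails ha hu hv x hx y hy).le
      simp [hmem', gammaWeight_append t hne hle, hne]
  have hG : wordSeries (words (insert a s)) (gammaWeight t false) =
      (G - 1) * T + (1 + MvPowerSeries.X a * T) := by
    rw [← hempty, ← hnonempty, ← wordSeries_indicator (tails_le_words a s), ← map_add,
      Set.indicator_compl_add_self]
  simp only [MvPowerSeries.smul_eq_C_mul] at hT ⊢
  rw [hG]
  linear_combination (G - 1 + MvPowerSeries.X a) * hT

end FunctionalEquation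

lemma wordSeries_desPlatWeight_eq_gammaWeight [CommRing R] (t : R) (s : Finset α) :
    wordSeries (words s) (desPlatWeight t) = wordSeries (words s) (gammaWeight t false) := by
  induction s using Finset.induction_on_max with
  | empty =>
    refine wordSeries_congr fun l hl => ?_
    obtain rfl : l = [] := List.eq_nil_iff_forall_not_mem.2 fun x hx => notMem_empty x (hl x hx)
    rfl
  | insert a s ha ih =>
    have hunit : IsUnit
        (1 - MvPowerSeries.X a * (1 + t • wordSeries (words s) (desPlatWeight t))) := by
      simp [MvPowerSeries.isUnit_iff_constantCoeff]
    refine hunit.mul_right_cancel ?_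
    rw [wordSeries_desPlatWeight_insert ha, ih, wordSeries_gammaWeight_insert ha]

theorem sum_permutations_desPlatWeight [CommRing R] (t : R) (l : List α) :
    ∑ m ∈ l.permutations.toFinset, desPlatWeight t m =
      ∑ m ∈ l.permutations.toFinset, gammaWeight t false m := by
  rw [← wordsOfContent_words_toFinset, ← coeff_wordSeries, ← coeff_wordSeries,
    wordSeries_desPlatWeight_eq_gammaWeight]

end Weights

/-! ### Descents and plateaus of words -/

section Positions

lemma card_eq_of_succ_mem_iff {S T : Finset ℕ} (h : ∀ i, i + 1 ∈ S ↔ i ∈ T) :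
    #S = #T + if 0 ∈ S then 1 else 0 := by
  have hT : #(S.erase 0) = #T := by
    have : S.erase 0 = T.map (addRightEmbedding 1) := by
      ext i
      cases i <;> simp [h]
    rw [this, card_map]
  split_ifs with h0
  · rw [← hT, card_erase_add_one h0]
  · rw [← hT, erase_eq_of_notMem h0, add_zero]

/-- `S` contains no two consecutive numbers; for descent sets this is the absence of double
descents. -/
def NoConsecutive (S : Finset ℕ) : Prop := ∀ i ∈ S, i + 1 ∉ S

lemma noConsecutive_iff_of_succ_mem_iff {S T : Finset ℕ} (h : ∀ i, i + 1 ∈ S ↔ i ∈ T) :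
    NoConsecutive S ↔ (0 ∈ S → 0 ∉ T) ∧ NoConsecutive T := by
  simp only [NoConsecutive, ← h]
  exact ⟨fun hS => ⟨hS 0, fun i => hS (i + 1)⟩,
    fun hS i hi => i.casesOn (motive := fun i => i ∈ S → i + 1 ∉ S) hS.1 hS.2 hi⟩

lemma two_mul_card_le {S : Finset ℕ} {n : ℕ} (hS : S ⊆ range n) (h : NoConsecutive S) :
    2 * #S ≤ n + 1 := by
  have hdisj : Disjoint S (S.map (addRightEmbedding 1)) := by
    rw [disjoint_right]
    intro j hj
    obtain ⟨i, hi, rfl⟩ := mem_map.1 hj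
    exact h i hi
  have hsub : S ∪ S.map (addRightEmbedding 1) ⊆ range (n + 1) := by
    refine union_subset (hS.trans (range_subset_range.2 n.le_succ)) fun j hj => ?_
    obtain ⟨i, hi, rfl⟩ := mem_map.1 hj
    simpa using hS hi
  simpa [card_union_of_disjoint hdisj, two_mul] using card_le_card hsub

/-- The (0-based) set of positions `i` of a word `v` of length `n` with `v i = v (i + 1)`. -/
def plateaus (n : ℕ) (v : Fin n → ℕ) : Finset ℕ :=
  (range (n - 1)).filter fun i => ∃ h : i + 1 < n, v ⟨i + 1, h⟩ = v ⟨i, by omega⟩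

variable {n : ℕ}

lemma mem_plateaus {v : Fin n → ℕ} {i : ℕ} :
    i ∈ plateaus n v ↔ ∃ h : i + 1 < n, v ⟨i + 1, h⟩ = v ⟨i, by omega⟩ := by
  simp only [plateaus, mem_filter, mem_range, and_iff_right_iff_imp]
  rintro ⟨h, -⟩
  omega

lemma mem_wdes {v : Fin n → ℕ} {i : ℕ} :
    i ∈ wdes n v ↔ ∃ h : i + 1 < n, v ⟨i + 1, h⟩ < v ⟨i, by omega⟩ := by
  simp only [wdes, mem_filter, mem_range, dite_else_false, and_iff_right_iff_imp]
  rintro ⟨h, -⟩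
  omega

lemma succ_mem_plateaus_iff {v : Fin (n + 1) → ℕ} (i : ℕ) :
    i + 1 ∈ plateaus (n + 1) v ↔ i ∈ plateaus n (Fin.tail v) := by
  simp [mem_plateaus, Fin.tail]

lemma succ_mem_wdes_iff {v : Fin (n + 1) → ℕ} (i : ℕ) :
    i + 1 ∈ wdes (n + 1) v ↔ i ∈ wdes n (Fin.tail v) := by
  simp [mem_wdes, Fin.tail]

lemma zero_mem_plateaus_iff {v : Fin (n + 2) → ℕ} : 0 ∈ plateaus (n + 2) v ↔ v 1 = v 0 := by
  simp [mem_plateaus]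

lemma zero_mem_wdes_iff {v : Fin (n + 2) → ℕ} : 0 ∈ wdes (n + 2) v ↔ v 1 < v 0 := by
  simp [mem_wdes]

variable {R : Type*} [CommSemiring R] (t : R)

lemma desPlatWeight_ofFn (v : Fin n → ℕ) :
    desPlatWeight t (List.ofFn v) = t ^ #(wdes n v) * (1 + t) ^ #(plateaus n v) := by
  induction n with
  | zero => simp [desPlatWeight, wdes, plateaus]
  | succ n ih =>
    cases n with
    | zero => simp [desPlatWeight, wdes, plateaus]
    | succ n =>
      have hrec : desPlatWeight t (List.ofFn v) =
          (if v 1 < v 0 then t else if v 1 = v 0 then 1 + t else 1) *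
            desPlatWeight t (List.ofFn (Fin.tail v)) := by
        simp [List.ofFn_succ, desPlatWeight, Fin.tail]
      rw [hrec, ih, card_eq_of_succ_mem_iff (succ_mem_wdes_iff (v := v)),
        card_eq_of_succ_mem_iff (succ_mem_plateaus_iff (v := v))]
      simp only [zero_mem_wdes_iff, zero_mem_plateaus_iff]
      split_ifs with hlt heq
      · exact absurd heq hlt.ne
      all_goals ring

lemma gammaWeight_ofFn (up : Bool) (v : Fin n → ℕ) :
    gammaWeight t up (List.ofFn v) =
      if NoConsecutive (wdes n v) ∧ (up = false → 0 ∉ wdes n v) then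
        t ^ #(wdes n v) * (1 + t) ^ (n + up.toNat - 1 - 2 * #(wdes n v)) else 0 := by
  induction n generalizing up with
  | zero => cases up <;> simp [gammaWeight, wdes, NoConsecutive]
  | succ n ih =>
    cases n with
    | zero => cases up <;> simp [gammaWeight, wdes, NoConsecutive]
    | succ n =>
      have hrec : gammaWeight t up (List.ofFn v) =
          if v 1 < v 0 then bif up then t * gammaWeight t false (List.ofFn (Fin.tail v)) else 0
          else (bif up then 1 + t else 1) * gammaWeight t true (List.ofFn (Fin.tail v)) := by
        cases up <;> simp [List.ofFn_succ, gammaWeight, Fin.tail]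
      have hcard := card_eq_of_succ_mem_iff (succ_mem_wdes_iff (v := v))
      have hno := noConsecutive_iff_of_succ_mem_iff (succ_mem_wdes_iff (v := v))
      have hbound : NoConsecutive (wdes (n + 1) (Fin.tail v)) →
          2 * #(wdes (n + 1) (Fin.tail v)) ≤ n + 1 := two_mul_card_le (filter_subset ..)
      rw [hrec]
      simp only [ih, hno, hcard, zero_mem_wdes_iff]
      generalize wdes (n + 1) (Fin.tail v) = T at hbound
      by_cases hlt : v 1 < v 0 <;> cases up
      · simp [hlt]
      · have hexp : n + 1 + 1 - 2 * (#T + 1) = n - 2 * #T := by omega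
        simp [hlt, hexp, and_comm, pow_succ', mul_assoc]
      · simp [hlt]
      · by_cases hT : NoConsecutive T
        · have hexp : n + 1 + 1 - 2 * #T = n + 1 - 2 * #T + 1 := by
            have := hbound hT
            omega
          simp [hlt, hT, hexp, pow_succ', mul_left_comm]
        · simp [hT]

end Positions

/-! ### Permutations and their block words -/

section OrbIdx

variable {K : Finset ℕ} {a b : ℕ}

lemma orbIdx_mono : Monotone (orbIdx K) := fun _ _ h => by
  unfold orbIdx
  gcongr

lemma orbIdx_succ_eq_iff (h : a ≤ b) :
    orbIdx K (a + 1) = orbIdx K (b + 1) ↔ ∀ k ∈ Ioc a b, k ∈ K := by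
  have hsub : (Icc 1 a).filter (· ∉ K) ⊆ (Icc 1 b).filter (· ∉ K) := by gcongr
  simp only [orbIdx, Nat.add_sub_cancel, Nat.add_left_cancel_iff]
  constructor
  · intro hcard k hk
    rw [mem_Ioc] at hk
    by_contra hkK
    have hmem : k ∈ (Icc 1 b).filter (· ∉ K) :=
      mem_filter.2 ⟨mem_Icc.2 ⟨by omega, hk.2⟩, hkK⟩
    rw [← eq_of_subset_of_card_le hsub hcard.ge, mem_filter, mem_Icc] at hmem
    omega
  · intro hK
    refine congrArg card (hsub.antisymm fun k hk => ?_)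
    rw [mem_filter, mem_Icc] at hk ⊢
    have hka : k ≤ a := by
      by_contra! hak
      exact hk.2 (hK k (mem_Ioc.2 ⟨hak, hk.1.2⟩))
    exact ⟨⟨hk.1.1, hka⟩, hk.2⟩

end OrbIdx

section Keys

variable {n : ℕ}

lemma existsUnique_perm_lt_iff_lt {β : Type*} [LinearOrder β] {f : Fin n → β}
    (hf : Function.Injective f) : ∃! v : Equiv.Perm (Fin n), ∀ i j, v i < v j ↔ f i < f j := by
  have hsort : StrictMono (f ∘ Tuple.sort f) :=
    (Tuple.monotone_sort f).strictMono_of_injective (hf.comp (Tuple.sort f).injective)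
  refine ⟨(Tuple.sort f)⁻¹, fun i j => ?_, fun v hv => ?_⟩
  · simpa using (hsort.lt_iff_lt (a := (Tuple.sort f)⁻¹ i) (b := (Tuple.sort f)⁻¹ j)).symm
  · have hmono : StrictMono (v * Tuple.sort f) := fun i j hij => (hv _ _).2 (hsort hij)
    rw [eq_inv_iff_mul_eq_one]
    exact Equiv.coe_fn_injective hmono.eq_id

/-- The number of the run containing the position `j` when the positions are cut between `i` and
`i + 1` for every `i ∉ D`. -/
def runIdx (D : Finset ℕ) (j : ℕ) : ℕ := orbIdx (D.map (addRightEmbedding 1)) (j + 1)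

lemma runIdx_mono (D : Finset ℕ) : Monotone (runIdx D) :=
  fun _ _ h => orbIdx_mono (Nat.succ_le_succ h)

lemma runIdx_eq_iff {D : Finset ℕ} {a b : ℕ} (h : a ≤ b) :
    runIdx D a = runIdx D b ↔ ∀ i ∈ Ico a b, i ∈ D := by
  rw [runIdx, runIdx, orbIdx_succ_eq_iff h]
  constructor
  · intro hD i hi
    rw [mem_Ico] at hi
    simpa using hD (i + 1) (mem_Ioc.2 (by omega))
  · intro hD k hk
    rw [mem_Ioc] at hk
    obtain ⟨i, rfl⟩ : ∃ i, k = i + 1 := ⟨k - 1, by omega⟩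
    simpa using hD i (mem_Ico.2 (by omega))

/-- The key that sorts the positions of a word `u` by the values of the permutation in `W(K)` with
block word `u` and with descents `D` inside blocks: by letter, then by run from left to right, and
inside a run from right to left. -/
def blockKey (u : Fin n → ℕ) (D : Finset ℕ) (j : Fin n) : ℕ ×ₗ ℕ ×ₗ (Fin n)ᵒᵈ :=
  toLex (u j, toLex (runIdx D j, OrderDual.toDual j))

lemma blockKey_injective (u : Fin n → ℕ) (D : Finset ℕ) : Function.Injective (blockKey u D) := by
  intro i j h
  simp only [blockKey, toLex_inj, Prod.mk.injEq, OrderDual.toDual_inj] at h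
  exact h.2.2

lemma blockKey_lt_iff {u : Fin n → ℕ} {D : Finset ℕ} {i j : Fin n} :
    blockKey u D i < blockKey u D j ↔ u i < u j ∨ u i = u j ∧
      (runIdx D i < runIdx D j ∨ runIdx D i = runIdx D j ∧ j < i) := by
  simp [blockKey, Prod.Lex.toLex_lt_toLex]

lemma blockKey_succ_lt_iff {u : Fin n → ℕ} {D : Finset ℕ} {i : ℕ} (hi : i ∈ plateaus n u)
    (h : i + 1 < n) : blockKey u D ⟨i + 1, h⟩ < blockKey u D ⟨i, by omega⟩ ↔ i ∈ D := by
  obtain ⟨_, hu⟩ := mem_plateaus.1 hi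
  have hrun := runIdx_eq_iff (D := D) i.le_succ
  simp only [Nat.succ_eq_add_one, mem_Ico, Nat.lt_add_one_iff, ← le_antisymm_iff,
    forall_eq'] at hrun
  have hmono : ¬ runIdx D (i + 1) < runIdx D i := (runIdx_mono D i.le_succ).not_gt
  simp [blockKey_lt_iff, hu, hmono, ← hrun, eq_comm]

end Keys

section Permutations

variable {n : ℕ} {K : Finset ℕ} {v w : Equiv.Perm (Fin n)}

/-- The word recording, for each position of `v`, the number of the `W_K`-orbit of the letter
there (`orbIdx` takes 1-based letters). -/
def blockWord (K : Finset ℕ) (v : Equiv.Perm (Fin n)) : Fin n → ℕ := fun j => orbIdx K (v j + 1)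

/-- The descents of `v` between two letters of the same `W_K`-orbit. -/
def blockDescents (n : ℕ) (K : Finset ℕ) (v : Equiv.Perm (Fin n)) : Finset ℕ :=
  DesSet n v ∩ plateaus n (blockWord K v)

lemma blockDescents_subset : blockDescents n K v ⊆ plateaus n (blockWord K v) :=
  inter_subset_right

lemma ol_coe (i : Fin n) : ol n v i = v i := by
  simp [ol]

lemma mem_DesSet {i : ℕ} : i ∈ DesSet n v ↔ ∃ h : i + 1 < n, v ⟨i + 1, h⟩ < v ⟨i, by omega⟩ := by
  rw [DesSet, mem_filter, mem_range, Nat.lt_sub_iff_add_lt, ← exists_prop]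
  refine exists_congr fun h => ?_
  rw [Fin.lt_def, ← ol_coe, ← ol_coe]

lemma mem_Wset_iff : v ∈ Wset n K ↔
    ∀ p q : Fin n, (v q : ℕ) = v p + 1 → (v q : ℕ) ∈ K → (p : ℕ) ≤ q + 1 := by
  simp only [Wset, mem_filter, mem_univ, true_and]
  constructor
  · intro h p q hpq hqK
    have hp : (⟨(v q : ℕ) - 1, by omega⟩ : Fin n) = v p := Fin.ext (by simp [hpq])
    simpa [hp] using h (v q) hqK (v q).isLt
  · intro h k hk hkn
    rcases k.eq_zero_or_pos with rfl | hpos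
    · exact Nat.le_succ _
    · exact h _ _ (by simpa using by omega) (by simpa using hk)

lemma WKreps_subset_Wset : WKreps n K ⊆ Wset n K :=
  monotone_filter_right _ fun _ _ h k hk hkn => (Fin.lt_def.1 (h k hk hkn)).le.trans (Nat.le_succ _)

lemma lt_of_mem_WKreps (hw : w ∈ WKreps n K) {p q : Fin n} (hpq : (w q : ℕ) = w p + 1)
    (hqK : (w q : ℕ) ∈ K) : p < q := by
  have hp : (⟨(w q : ℕ) - 1, by omega⟩ : Fin n) = w p := Fin.ext (by simp [hpq])
  simpa [hp] using (mem_filter.1 hw).2 (w q) hqK (w q).isLt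

lemma mem_WKreps_of_lt (hK : ∀ k ∈ K, 1 ≤ k)
    (h : ∀ p q : Fin n, (w q : ℕ) = w p + 1 → (w q : ℕ) ∈ K → p < q) : w ∈ WKreps n K := by
  refine mem_filter.2 ⟨mem_univ w, fun k hk hkn => ?_⟩
  have := hK k hk
  exact h _ _ (by simpa using by omega) (by simpa using hk)

lemma blockWord_eq_of_succ {p q : Fin n} (h : (v q : ℕ) = v p + 1) (hK : (v q : ℕ) ∈ K) :
    blockWord K v p = blockWord K v q := by
  refine (orbIdx_succ_eq_iff (by omega)).2 fun k hk => ?_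
  rw [mem_Ioc] at hk
  obtain rfl : k = v q := by omega
  exact hK

lemma lt_of_blockWord_lt {p q : Fin n} (h : blockWord K v p < blockWord K v q) : v p < v q := by
  by_contra! hle
  exact h.not_ge (orbIdx_mono (by simpa using hle))

lemma mem_blockDescents {i : ℕ} : i ∈ blockDescents n K v ↔ ∃ h : i + 1 < n,
    v ⟨i + 1, h⟩ < v ⟨i, by omega⟩ ∧ blockWord K v ⟨i + 1, h⟩ = blockWord K v ⟨i, by omega⟩ := by
  rw [blockDescents, mem_inter, mem_DesSet, mem_plateaus]
  exact ⟨fun ⟨⟨h, hlt⟩, _, heq⟩ => ⟨h, hlt, heq⟩, fun ⟨h, hlt, heq⟩ => ⟨⟨h, hlt⟩, h, heq⟩⟩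

/-- On the way from the letter `v p` up to `v q`, each increase by one moves at most one position to
the left, so every position between `q` and `p` is crossed by such a step, which is a descent. -/
lemma mem_blockDescents_of_le (hv : v ∈ Wset n K) {p q : Fin n} (hle : v p ≤ v q)
    (hblock : blockWord K v p = blockWord K v q) :
    ∀ i ∈ Ico (q : ℕ) p, i ∈ blockDescents n K v := by
  obtain ⟨b, hb⟩ : ∃ b, (v q : ℕ) = b := ⟨_, rfl⟩
  have hpb : (v p : ℕ) ≤ b := hb ▸ hle
  clear hle
  induction b, hpb using Nat.le_induction generalizing q with
  | base =>
    obtain rfl : q = p := v.injective (Fin.ext hb)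
    simp
  | succ b hpb ih =>
    intro i hi
    rw [mem_Ico] at hi
    obtain ⟨r, hr⟩ : ∃ r, (v r : ℕ) = b :=
      ⟨v⁻¹ ⟨b, by omega⟩, by simp⟩
    have hK := (orbIdx_succ_eq_iff (by omega)).1 hblock
    have hpr : blockWord K v p = blockWord K v r :=
      (orbIdx_succ_eq_iff (by omega)).2 fun k hk => hK k (Ioc_subset_Ioc_right (by omega) hk)
    rcases le_or_gt (r : ℕ) i with hri | hir
    · exact ih hpr hr i (mem_Ico.2 ⟨hri, hi.2⟩)
    · have hrq : (r : ℕ) ≤ q + 1 :=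
        mem_Wset_iff.1 hv r q (by omega) (hK _ (mem_Ioc.2 ⟨by omega, le_rfl⟩))
      obtain rfl : i = q := by omega
      have hsucc : (⟨q + 1, by omega⟩ : Fin n) = r := Fin.ext (show (q : ℕ) + 1 = r by omega)
      refine mem_blockDescents.2 ⟨by omega, ?_⟩
      rw [hsucc, ← hpr, ← hblock]
      exact ⟨show (v r : ℕ) < v q by omega, rfl⟩

lemma lt_of_forall_mem_DesSet {p q : Fin n} (hlt : q < p)
    (h : ∀ i ∈ Ico (q : ℕ) p, i ∈ DesSet n v) : v p < v q := by
  have hanti : StrictAntiOn (ol n v) (Set.Icc q p) :=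
    strictAntiOn_of_add_one_lt Set.ordConnected_Icc fun i _ hi hi' =>
      (mem_filter.1 (h i (mem_Ico.2 ⟨hi.1, hi'.2⟩))).2
  have := hanti (Set.left_mem_Icc.2 hlt.le) (Set.right_mem_Icc.2 hlt.le) hlt
  rwa [ol_coe, ol_coe] at this

lemma lt_iff_blockKey_lt_of_mem_Wset (hv : v ∈ Wset n K) (i j : Fin n) :
    v i < v j ↔ blockKey (blockWord K v) (blockDescents n K v) i <
      blockKey (blockWord K v) (blockDescents n K v) j := by
  have hmono : ∀ i j, blockKey (blockWord K v) (blockDescents n K v) i <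
      blockKey (blockWord K v) (blockDescents n K v) j → v i < v j := by
    intro i j hkey
    rcases blockKey_lt_iff.1 hkey with hlt | ⟨hblock, hrun | ⟨hrun, hji⟩⟩
    · exact lt_of_blockWord_lt hlt
    · by_contra! hle
      have hij : (i : ℕ) < j := (runIdx_mono _).reflect_lt hrun
      exact hrun.ne ((runIdx_eq_iff hij.le).2 (mem_blockDescents_of_le hv hle hblock.symm))
    · exact lt_of_forall_mem_DesSet hji fun k hk =>
        mem_of_mem_inter_left ((runIdx_eq_iff hji.le).1 hrun.symm k hk)
  refine ⟨fun h => ?_, hmono i j⟩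
  by_contra! hle
  rcases hle.lt_or_eq with hlt | heq
  · exact (hmono j i hlt).not_gt h
  · exact h.ne (congrArg v (blockKey_injective _ _ heq).symm)

lemma blockWord_eq_of_lt_imp (h : ∀ i j, blockWord K v i < blockWord K v j → w i < w j) :
    blockWord K v = blockWord K w := by
  let f : Fin n → ℕ := fun x => orbIdx K (x + 1)
  have hf : Monotone f := fun x y hxy => orbIdx_mono (by simpa using hxy)
  have hfv : Monotone (f ∘ (v * w⁻¹)) := by
    intro x y hxy
    by_contra! hlt
    exact (h (w⁻¹ y) (w⁻¹ x) hlt).not_ge (by simpa using hxy)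
  have heq : f ∘ (v * w⁻¹) = f ∘ (1 : Equiv.Perm (Fin n)) := Tuple.unique_monotone hfv hf
  funext i
  simpa [f, blockWord] using congrFun heq (w i)

section OfKey

variable {D : Finset ℕ} (hD : D ⊆ plateaus n (blockWord K v))
  (h : ∀ i j, v i < v j ↔ blockKey (blockWord K v) D i < blockKey (blockWord K v) D j)

include hD h

lemma mem_Wset_of_lt_iff_blockKey_lt : v ∈ Wset n K := by
  refine mem_Wset_iff.2 fun p q hpq hqK => ?_
  by_contra! hlt
  have hblock := blockWord_eq_of_succ hpq hqK
  have hrun : runIdx D q = runIdx D p := by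
    have hkey := blockKey_lt_iff.1 ((h p q).1 (Fin.lt_def.2 (by omega)))
    have hmono := runIdx_mono D (show (q : ℕ) ≤ p by omega)
    omega
  have hmem := (runIdx_eq_iff (by omega)).1 hrun
  have hq : (q : ℕ) ∈ D := hmem q (mem_Ico.2 (by omega))
  have hr : (q : ℕ) + 1 < n := by omega
  have hrq : v ⟨q + 1, hr⟩ < v q := (h _ _).2 ((blockKey_succ_lt_iff (hD hq) hr).2 hq)
  obtain ⟨_, hu⟩ := mem_plateaus.1 (hD hq)
  have hpr : v p < v ⟨q + 1, hr⟩ := by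
    refine (h _ _).2 (blockKey_lt_iff.2 (Or.inr ⟨hblock.trans hu.symm, Or.inr ⟨?_, hlt⟩⟩))
    refine ((runIdx_eq_iff hlt.le).2 fun i hi => hmem i ?_).symm
    exact Ico_subset_Ico_left q.val.le_succ hi
  rw [Fin.lt_def] at hrq hpr
  omega

lemma blockDescents_eq_of_lt_iff_blockKey_lt : blockDescents n K v = D := by
  ext i
  rw [blockDescents, mem_inter, mem_DesSet]
  constructor
  · rintro ⟨⟨hi, hlt⟩, hplat⟩
    exact (blockKey_succ_lt_iff hplat hi).1 ((h _ _).1 hlt)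
  · intro hi
    obtain ⟨hin, -⟩ := mem_plateaus.1 (hD hi)
    exact ⟨⟨hin, (h _ _).2 ((blockKey_succ_lt_iff (hD hi) hin).2 hi)⟩, hD hi⟩

end OfKey

theorem existsUnique_mem_Wset {D : Finset ℕ} (hD : D ⊆ plateaus n (blockWord K w)) :
    ∃! v, v ∈ Wset n K ∧ blockWord K v = blockWord K w ∧ blockDescents n K v = D := by
  obtain ⟨v, hv, huniq⟩ := existsUnique_perm_lt_iff_lt (blockKey_injective (blockWord K w) D)
  have hword : blockWord K w = blockWord K v := blockWord_eq_of_lt_imp fun i j hij =>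
    (hv i j).2 (blockKey_lt_iff.2 (Or.inl hij))
  refine ⟨v, ?_, ?_⟩
  · rw [hword] at hD hv
    exact ⟨mem_Wset_of_lt_iff_blockKey_lt hD hv, hword.symm,
      blockDescents_eq_of_lt_iff_blockKey_lt hD hv⟩
  · rintro v' ⟨hv', hword', rfl⟩
    refine huniq v' fun i j => ?_
    rw [← hword']
    exact lt_iff_blockKey_lt_of_mem_Wset hv' i j

lemma blockDescents_eq_empty_of_mem_WKreps (hw : w ∈ WKreps n K) :
    blockDescents n K w = ∅ := by
  refine eq_empty_of_forall_notMem fun i hi => ?_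
  obtain ⟨hin, hlt, hblock⟩ := mem_blockDescents.1 hi
  set q : Fin n := ⟨i, by omega⟩
  set r : Fin n := ⟨i + 1, hin⟩
  obtain ⟨p, hp⟩ : ∃ p, (w q : ℕ) = w p + 1 :=
    ⟨w⁻¹ ⟨w q - 1, by omega⟩, by simpa using by omega⟩
  have hqK := (orbIdx_succ_eq_iff (by omega)).1 hblock (w q) (mem_Ioc.2 ⟨by omega, le_rfl⟩)
  have hpq : p < q := lt_of_mem_WKreps hw hp hqK
  have hrp : blockWord K w r = blockWord K w p := by
    rw [hblock, blockWord_eq_of_succ hp hqK]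
  have hqp : w q < w p := lt_of_forall_mem_DesSet hpq fun j hj =>
    mem_of_mem_inter_left (mem_blockDescents_of_le (WKreps_subset_Wset hw) (p := r) (q := p)
      (by omega) hrp j (Ico_subset_Ico_right i.le_succ hj))
  omega

lemma mem_WKreps_iff (hK : ∀ k ∈ K, 1 ≤ k) :
    w ∈ WKreps n K ↔ w ∈ Wset n K ∧ blockDescents n K w = ∅ := by
  refine ⟨fun hw => ⟨WKreps_subset_Wset hw, blockDescents_eq_empty_of_mem_WKreps hw⟩, ?_⟩
  rintro ⟨hw, hempty⟩
  refine mem_WKreps_of_lt hK fun p q hpq hqK => ?_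
  have hle := mem_Wset_iff.1 hw p q hpq hqK
  by_contra! hqp
  have hne : p ≠ q := by
    rintro rfl
    omega
  have hq : (q : ℕ) ∈ blockDescents n K w :=
    mem_blockDescents_of_le hw (by omega) (blockWord_eq_of_succ hpq hqK) q
      (mem_Ico.2 (by omega))
  exact notMem_empty _ (hempty ▸ hq)

lemma mem_DesSet_iff_mem_wdes_or {i : ℕ} :
    i ∈ DesSet n v ↔ i ∈ wdes n (blockWord K v) ∨ i ∈ blockDescents n K v := by
  rw [mem_DesSet, mem_wdes, mem_blockDescents, ← exists_or]
  refine exists_congr fun h => ⟨fun hlt => ?_, ?_⟩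
  · have hle : blockWord K v ⟨i + 1, h⟩ ≤ blockWord K v ⟨i, by omega⟩ :=
      orbIdx_mono (Nat.succ_le_succ hlt.le)
    exact hle.lt_or_eq.imp_right fun heq => ⟨hlt, heq⟩
  · rintro (hlt | ⟨hlt, -⟩)
    exacts [lt_of_blockWord_lt hlt, hlt]

lemma des_eq_card_wdes_add_card_blockDescents (K : Finset ℕ) (v : Equiv.Perm (Fin n)) :
    des n v = #(wdes n (blockWord K v)) + #(blockDescents n K v) := by
  have hdisj : Disjoint (wdes n (blockWord K v)) (blockDescents n K v) := by
    refine disjoint_left.2 fun i hi hi' => ?_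
    obtain ⟨_, hlt⟩ := mem_wdes.1 hi
    obtain ⟨_, -, heq⟩ := mem_blockDescents.1 hi'
    exact hlt.ne heq
  rw [des, ← card_union_of_disjoint hdisj]
  congr 1
  ext i
  rw [mem_union, mem_DesSet_iff_mem_wdes_or]

lemma DesSet_eq_wdes_of_mem_WKreps (hw : w ∈ WKreps n K) :
    DesSet n w = wdes n (blockWord K w) := by
  ext i
  simp [mem_DesSet_iff_mem_wdes_or (K := K), blockDescents_eq_empty_of_mem_WKreps hw]

lemma existsUnique_mem_WKreps (hK : ∀ k ∈ K, 1 ≤ k) (v : Equiv.Perm (Fin n)) :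
    ∃! w, w ∈ WKreps n K ∧ blockWord K w = blockWord K v := by
  simpa only [mem_WKreps_iff hK, and_assoc, and_comm (a := blockDescents n K _ = ∅)] using
    existsUnique_mem_Wset (w := v) (empty_subset (plateaus n (blockWord K v)))

lemma permutations_ofFn_toFinset {α : Type*} [LinearOrder α] (f : Fin n → α) :
    (List.ofFn f).permutations.toFinset =
      univ.image fun σ : Equiv.Perm (Fin n) => List.ofFn (f ∘ σ) := by
  ext l
  simp only [List.mem_toFinset, List.mem_permutations, mem_image, mem_univ, true_and]
  constructor
  · intro hl
    obtain ⟨g, rfl⟩ : ∃ g : Fin n → α, l = List.ofFn g := by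
      obtain rfl : l.length = n := by simpa using hl.length_eq
      exact ⟨l.get, (List.ofFn_get l).symm⟩
    have hsort : g ∘ Tuple.sort g = f ∘ Tuple.sort f := by
      refine List.ofFn_injective (List.Perm.eq_of_pairwise'
        (Tuple.monotone_sort g).sortedLE_ofFn.pairwise
        (Tuple.monotone_sort f).sortedLE_ofFn.pairwise ?_)
      exact ((Equiv.Perm.ofFn_comp_perm _ g).trans hl).trans
        (Equiv.Perm.ofFn_comp_perm _ f).symm
    refine ⟨Tuple.sort f * (Tuple.sort g)⁻¹, congrArg List.ofFn ?_⟩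
    rw [Equiv.Perm.coe_mul, ← Function.comp_assoc, ← hsort, Function.comp_assoc,
      ← Equiv.Perm.coe_mul, mul_inv_cancel, Equiv.Perm.coe_one, Function.comp_id]
  · rintro ⟨σ, rfl⟩
    exact Equiv.Perm.ofFn_comp_perm σ f

variable {R : Type*}

lemma sum_image_blockWord [AddCommMonoid R] (f : List ℕ → R) :
    ∑ u ∈ univ.image (blockWord (n := n) K), f (List.ofFn u) =
      ∑ l ∈ (List.ofFn (blockWord K (1 : Equiv.Perm (Fin n)))).permutations.toFinset, f l := by
  have himage : (List.ofFn (blockWord K (1 : Equiv.Perm (Fin n)))).permutations.toFinset =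
      (univ.image (blockWord (n := n) K)).image List.ofFn := by
    rw [permutations_ofFn_toFinset, image_image]
    rfl
  rw [himage, sum_image List.ofFn_injective.injOn]

variable [CommSemiring R] (t : R)

lemma sum_fiber_Wset (w : Equiv.Perm (Fin n)) :
    ∑ v ∈ Wset n K with blockWord K v = blockWord K w, t ^ des n v =
      desPlatWeight t (List.ofFn (blockWord K w)) := by
  have hbij : ∑ v ∈ Wset n K with blockWord K v = blockWord K w, t ^ des n v =
      ∑ D ∈ (plateaus n (blockWord K w)).powerset, t ^ (#(wdes n (blockWord K w)) + #D) := by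
    refine sum_nbij (blockDescents n K) ?_ ?_ ?_ ?_
    · intro v hv
      rw [mem_powerset, ← (mem_filter.1 hv).2]
      exact blockDescents_subset
    · intro v hv v' hv' heq
      have hv := mem_filter.1 hv
      have hv' := mem_filter.1 hv'
      have hD : blockDescents n K v ⊆ plateaus n (blockWord K w) := hv.2 ▸ blockDescents_subset
      exact (existsUnique_mem_Wset hD).unique ⟨hv.1, hv.2, rfl⟩ ⟨hv'.1, hv'.2, heq.symm⟩
    · intro D hD
      obtain ⟨v, ⟨hv, hword, hdes⟩, -⟩ := existsUnique_mem_Wset (mem_powerset.1 hD)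
      exact ⟨v, mem_filter.2 ⟨hv, hword⟩, hdes⟩
    · intro v hv
      rw [des_eq_card_wdes_add_card_blockDescents K, (mem_filter.1 hv).2]
  have hsum := sum_pow_mul_eq_add_pow t 1 (plateaus n (blockWord K w))
  simp only [one_pow, mul_one] at hsum
  rw [hbij, desPlatWeight_ofFn, add_comm 1 t, ← hsum, mul_sum]
  simp only [pow_add]

lemma sum_Wset_pow_des (n : ℕ) (K : Finset ℕ) :
    ∑ v ∈ Wset n K, t ^ des n v =
      ∑ u ∈ univ.image (blockWord (n := n) K), desPlatWeight t (List.ofFn u) := by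
  rw [← sum_fiberwise_of_maps_to fun v _ => mem_image_of_mem (blockWord K) (mem_univ v)]
  refine sum_congr rfl fun u hu => ?_
  obtain ⟨w, -, rfl⟩ := mem_image.1 hu
  exact sum_fiber_Wset t w

lemma sum_WKreps_pow_des_mul (hK : ∀ k ∈ K, 1 ≤ k) :
    ∑ w ∈ (WKreps n K).filter (fun w => NoDoubleDescent n w ∧ NoInitialDescent n w),
        t ^ des n w * (1 + t) ^ (n - 1 - 2 * des n w) =
      ∑ u ∈ univ.image (blockWord (n := n) K), gammaWeight t false (List.ofFn u) := by
  rw [sum_filter]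
  refine sum_nbij (blockWord K) (fun w _ => mem_image_of_mem _ (mem_univ w)) ?_ ?_ ?_
  · intro w hw w' hw' heq
    exact (existsUnique_mem_WKreps hK w').unique ⟨hw, heq⟩ ⟨hw', rfl⟩
  · intro u hu
    obtain ⟨v, -, rfl⟩ := mem_image.1 hu
    obtain ⟨w, hw, -⟩ := existsUnique_mem_WKreps hK v
    exact ⟨w, hw⟩
  · intro w hw
    rw [gammaWeight_ofFn, ← DesSet_eq_wdes_of_mem_WKreps hw]
    exact if_congr (by simp [NoDoubleDescent, NoInitialDescent, NoConsecutive]) rfl rfl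

end Permutations

theorem main_theorem_tilde (n : ℕ) (K : Finset ℕ)
    (hK : ∀ k ∈ K, 1 ≤ k ∧ k ≤ n - 1) :
    ∑ v ∈ Wset n K, (X : Polynomial ℕ) ^ des n v =
      ∑ w ∈ (WKreps n K).filter
          (fun w => NoDoubleDescent n w ∧ NoInitialDescent n w),
        (X : Polynomial ℕ) ^ des n w * (1 + X) ^ (n - 1 - 2 * des n w) := by
  apply Polynomial.map_injective (Nat.castRingHom ℤ) Nat.cast_injective
  have hK' : ∀ k ∈ K, 1 ≤ k := fun k hk => (hK k hk).1
  have h := sum_permutations_desPlatWeight (X : ℤ[X])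
    (List.ofFn (blockWord K (1 : Equiv.Perm (Fin n))))
  rw [← sum_image_blockWord, ← sum_image_blockWord, ← sum_Wset_pow_des,
    ← sum_WKreps_pow_des_mul _ hK'] at h
  simpa [Polynomial.map_sum] using h
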